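/- arXiv:2310.03369 — 2 statements merged into one kernel-verified Lean document; each statement's English description precedes it below -/
import Mathlib

section
/- (Klingenberg Lemma.) Let X be a proper geodesic metric space and p ∈ X. If q is a point in the closure of Cut(p) with inj(p) = dist(p,q) > 0, then either q is conjugate to p along some geodesic from p to q, or there exists a local geodesic γ : [0,1] → X with γ(0) = γ(1) = p, length L(γ) = 2·inj(p), and midpoint γ(1/2) = q. -/
open Set Metric Topology Filter
open scoped ENNReal

noncomputable section

namespace InjSoul

/-- The unit interval `[0,1] ⊆ ℝ`. -/
abbrev I01 : Set ℝ := Set.Icc (0 : ℝ) 1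

variable {X : Type*} [MetricSpace X]

/-- `0` as a point of `[0,1]`. -/
def pt0 : I01 := ⟨0, by norm_num⟩

/-- `1` as a point of `[0,1]`. -/
def pt1 : I01 := ⟨1, by norm_num⟩

/-- `c : [0,1] → X` is a geodesic of speed (= length) `L`. -/
def IsGeod (c : C(I01, X)) (L : ℝ) : Prop :=
  0 ≤ L ∧ ∀ s t : I01, dist (c s) (c t) = L * |(s : ℝ) - (t : ℝ)|

/-- `γ : [0,1] → X` is a local geodesic of speed (= length) `L`. -/
def IsLocGeod (γ : C(I01, X)) (L : ℝ) : Prop :=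
  0 ≤ L ∧ ∀ t : I01, ∃ ε > 0, ∀ s s' : I01,
    |(s : ℝ) - (t : ℝ)| < ε → |(s' : ℝ) - (t : ℝ)| < ε →
      dist (γ s) (γ s') = L * |(s : ℝ) - (s' : ℝ)|

/-- `X` is a geodesic space: any two points are joined by a geodesic. -/
def GeodesicSpace (X : Type*) [MetricSpace X] : Prop :=
  ∀ x y : X, ∃ (c : C(I01, X)) (L : ℝ), IsGeod c L ∧ c pt0 = x ∧ c pt1 = y

/-- The cut locus of `p`: all points joined to `p` by at least two distinct geodesics. -/
def Cut (p : X) : Set X :=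
  {q | ∃ (γ σ : C(I01, X)) (Lγ Lσ : ℝ), IsGeod γ Lγ ∧ IsGeod σ Lσ ∧
    γ pt0 = p ∧ γ pt1 = q ∧ σ pt0 = p ∧ σ pt1 = q ∧ γ ≠ σ}

/-- The injectivity radius of `p`, an element of `[0,∞]` (`∞` if `Cut p = ∅`). -/
def inj (p : X) : ℝ≥0∞ := ⨅ q ∈ Cut p, edist p q

/-- The minimal cut locus of `p`: points `γ t₀`, `t₀ ∈ (0,1)`, on a nontrivial local geodesic
`γ` issuing in `p` such that `γ` is minimizing on `[0,t₀]` but on no larger interval `[0,t]`. -/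
def MinCut (p : X) : Set X :=
  {q | ∃ (γ : C(I01, X)) (L : ℝ) (t₀ : ℝ) (ht₀ : t₀ ∈ Set.Ioo (0 : ℝ) 1),
      IsLocGeod γ L ∧ 0 < L ∧ γ pt0 = p ∧ γ ⟨t₀, Set.mem_Icc_of_Ioo ht₀⟩ = q ∧
      dist p q = L * t₀ ∧
      ∀ t : ℝ, ∀ ht : t ∈ Set.Ioc t₀ 1,
        dist p (γ ⟨t, ⟨(ht₀.1.trans ht.1).le, ht.2⟩⟩) ≠ L * t}

/-- The minimal radius of `p`, an element of `[0,∞]` (`∞` if `MinCut p = ∅`). -/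
def minRad (p : X) : ℝ≥0∞ := ⨅ q ∈ MinCut p, edist p q

/-- The space `X̃_p` of local geodesics issuing in `p` (including the constant map), viewed
as a subset of the continuous maps `C([0,1], X)` whose metric is the uniform metric `ρ`. -/
def LocGeodFrom (p : X) : Set C(I01, X) := {γ | (∃ L, IsLocGeod γ L) ∧ γ pt0 = p}

/-- The endpoint map `exp_p : X̃_p → X`, `γ ↦ γ 1`. -/
def endpt : C(I01, X) → X := fun γ => γ pt1

/-- `γ 1` is conjugate to `p = γ 0` along the local geodesic `γ`: no neighborhood `U` of `γ`
in `X̃_p` is mapped homeomorphically onto its image by the endpoint map. -/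
def ConjugateAlong (p : X) (γ : C(I01, X)) : Prop :=
  γ ∈ LocGeodFrom p ∧
    ¬ ∃ U : Set C(I01, X), U ⊆ LocGeodFrom p ∧ U ∈ 𝓝[LocGeodFrom p] γ ∧
      Topology.IsEmbedding (U.restrict endpt)

/-- The conjugate radius of `p`: the infimum of lengths of local geodesics issuing in `p`
along which the endpoint is conjugate to `p` (`∞` if there are none). -/
def conjRad (p : X) : ℝ≥0∞ :=
  sInf {l | ∃ (γ : C(I01, X)) (L : ℝ), IsLocGeod γ L ∧ γ pt0 = p ∧
    ConjugateAlong p γ ∧ l = ENNReal.ofReal L}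

/-- The conjugate radius of the space `X`. -/
def conjSpace (X : Type*) [MetricSpace X] : ℝ≥0∞ := ⨅ p : X, conjRad p


/-- Geodesics issuing in `p` of length at most `R`. -/
def KG (p : X) (R : ℝ) : Set C(I01, X) :=
  {c | (∀ s t : I01, dist (c s) (c t) = dist p (c pt1) * |(s : ℝ) - (t : ℝ)|) ∧ c pt0 = p ∧
    dist p (c pt1) ≤ R}

lemma IsGeod.len {c : C(I01, X)} {L : ℝ} (h : IsGeod c L) : dist (c pt0) (c pt1) = L := by
  rw [h.2]; simp [pt0, pt1]

lemma IsGeod.mem_KG {c : C(I01, X)} {L R : ℝ} {p : X} (h : IsGeod c L) (hp : c pt0 = p)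
    (hR : dist p (c pt1) ≤ R) : c ∈ KG p R := by
  refine ⟨?_, hp, hR⟩
  have := h.len
  rw [hp] at this
  rw [this]
  exact h.2

lemma KG_isGeod {c : C(I01, X)} {R : ℝ} {p : X} (h : c ∈ KG p R) :
    IsGeod c (dist p (c pt1)) := ⟨dist_nonneg, h.1⟩

lemma IsGeod.isLoc {c : C(I01, X)} {L : ℝ} (h : IsGeod c L) : IsLocGeod c L :=
  ⟨h.1, fun _ => ⟨1, one_pos, fun s s' _ _ => h.2 s s'⟩⟩

lemma continuous_endpt : Continuous (endpt : C(I01, X) → X) :=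
  continuous_eval_const _

lemma isClosed_KG (p : X) (R : ℝ) : IsClosed (KG p R) := by
  have e : ∀ t : I01, Continuous (fun c : C(I01, X) => c t) := fun t =>
    continuous_eval_const t
  have h1 : IsClosed {c : C(I01, X) | ∀ s t : I01,
      dist (c s) (c t) = dist p (c pt1) * |(s : ℝ) - (t : ℝ)|} := by
    simp only [ofPred_forall]
    refine isClosed_iInter fun s => isClosed_iInter fun t => ?_
    exact isClosed_eq ((e s).dist (e t)) ((continuous_const.dist (e pt1)).mul continuous_const)
  have h2 : IsClosed {c : C(I01, X) | c pt0 = p} := isClosed_eq (e _) continuous_const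
  have h3 : IsClosed {c : C(I01, X) | dist p (c pt1) ≤ R} :=
    isClosed_le (continuous_const.dist (e _)) continuous_const
  exact h1.inter (h2.inter h3)

lemma isCompact_KG [ProperSpace X] (p : X) (R : ℝ) : IsCompact (KG p R) := by
  let Φ := ContinuousMap.isometryEquivBoundedOfCompact I01 X
  have hΦ : ∀ (f) (x : I01), (Φ.symm f) x = f x := fun f x => rfl
  have key : IsCompact (Φ.symm ⁻¹' (KG p R)) := by
    refine BoundedContinuousFunction.arzela_ascoli₂ (closedBall p R) (isCompact_closedBall p R) _
      ((isClosed_KG p R).preimage Φ.symm.continuous) ?_ ?_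
    · intro f x hf
      obtain ⟨h1, h2, h3⟩ := hf
      have := h1 x pt0
      rw [h2, hΦ] at this
      rw [mem_closedBall, this]
      have hx : |(x : ℝ) - (pt0 : I01)| ≤ 1 := by
        simp only [pt0, sub_zero]
        rw [abs_of_nonneg x.2.1]; exact x.2.2
      calc _ ≤ dist p (Φ.symm f pt1) * 1 := by gcongr
        _ ≤ R := by linarith
    · intro x
      rw [Metric.equicontinuousAt_iff]
      intro ε hε
      have hR : 0 < |R| + 1 := by positivity
      refine ⟨ε / (|R| + 1), by positivity, ?_⟩
      rintro y hy ⟨f, h1, h2, h3⟩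
      have := h1 x y
      rw [hΦ, hΦ] at this
      show dist (f x) (f y) < ε
      rw [this]
      rw [dist_comm, Subtype.dist_eq, Real.dist_eq, lt_div_iff₀ hR] at hy
      have h4 : dist p (Φ.symm f pt1) ≤ |R| + 1 := by linarith [le_abs_self R]
      calc _ ≤ (|R| + 1) * |(x : ℝ) - y| := by gcongr
        _ < ε := by linarith
  have := key.image Φ.symm.continuous
  rwa [image_preimage_eq _ Φ.symm.surjective] at this

/-- Initial part of a curve, reparametrized. -/
def initPart (c : C(I01, X)) (a : I01) : C(I01, X) :=
  ⟨fun t => c ⟨a * t, unitInterval.mul_mem a.2 t.2⟩, by fun_prop⟩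

lemma initPart_geod {c : C(I01, X)} {L : ℝ} (h : IsGeod c L) (a : I01) :
    IsGeod (initPart c a) (L * a) := by
  refine ⟨mul_nonneg h.1 a.2.1, fun s t => ?_⟩
  show dist (c _) (c _) = _
  rw [h.2]
  show L * |(a : ℝ) * s - a * t| = _
  rw [← mul_sub, abs_mul, abs_of_nonneg a.2.1]; ring

lemma initPart_zero (c : C(I01, X)) (a : I01) : initPart c a pt0 = c pt0 := by
  simp [initPart, pt0]

lemma initPart_one (c : C(I01, X)) (a : I01) : initPart c a pt1 = c a := by
  simp [initPart, pt1]

lemma initPart_dist {c : C(I01, X)} {L : ℝ} (h : IsGeod c L) (a : I01) :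
    dist (initPart c a) c ≤ L * (1 - a) := by
  have ha : 0 ≤ 1 - (a : ℝ) := by linarith [a.2.2]
  rw [ContinuousMap.dist_le (mul_nonneg h.1 ha)]
  intro t
  show dist (c _) (c _) ≤ _
  rw [h.2]
  show L * |(a : ℝ) * t - t| ≤ _
  refine mul_le_mul_of_nonneg_left ?_ h.1
  have : (a : ℝ) * t - t = -((1 - a) * t) := by ring
  rw [this, abs_neg, abs_of_nonneg (mul_nonneg ha t.2.1)]
  exact mul_le_of_le_one_right ha t.2.2

lemma core [ProperSpace X] (hgeo : GeodesicSpace X) {p q : X} {γ σ : C(I01, X)} {L r : ℝ}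
    (hγ : IsGeod γ L) (hσ : IsGeod σ L) (hγ0 : γ pt0 = p) (hσ0 : σ pt0 = p) (hγ1 : γ pt1 = q)
    (hcut : ∀ m, dist p m < L → m ∉ Cut p) (a b : I01)
    (hab : dist (γ a) (σ b) < L * (1 - a) + L * (1 - b))
    (har : L * (1 - a) < r) (hbr : L * (1 - b) < dist γ σ - r) :
    ∃ c ∈ KG p L, dist c γ = r ∧ dist (endpt c) q ≤ 2 * (L * (1 - a)) + L * (1 - b) := by
  obtain ⟨m, M, hm, hm0, hm1⟩ := hgeo (γ a) (σ b)
  have hM : dist (γ a) (σ b) = M := by rw [← hm.len, hm0, hm1]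
  have hpa : dist p (γ a) = L * a := by
    rw [← hγ0, hγ.2]; simp [pt0, abs_of_nonneg a.2.1]
  have hpb : dist p (σ b) = L * b := by
    rw [← hσ0, hσ.2]; simp [pt0, abs_of_nonneg b.2.1]
  have hqa : dist (γ a) q = L * (1 - a) := by
    rw [← hγ1, hγ.2, abs_sub_comm]; simp only [pt1]; rw [abs_of_nonneg (by linarith [a.2.2])]
  have ham : ∀ u, dist (γ a) (m u) = M * u := by
    intro u; rw [← hm0, hm.2]; simp [pt0, abs_of_nonneg u.2.1]
  have hbm : ∀ u, dist (σ b) (m u) = M * (1 - u) := by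
    intro u; rw [← hm1, hm.2]; simp only [pt1]; rw [abs_of_nonneg (by linarith [u.2.2])]
  have hlt : ∀ u, dist p (m u) < L := by
    intro u
    have t1 := dist_triangle p (γ a) (m u)
    have t2 := dist_triangle p (σ b) (m u)
    rw [ham] at t1
    rw [hbm] at t2
    linarith
  have hqm : ∀ u, dist (m u) q ≤ 2 * (L * (1 - a)) + L * (1 - b) := by
    intro u
    have t1 := dist_triangle (m u) (γ a) q
    rw [dist_comm (m u) (γ a), ham, hqa] at t1
    have : M * u ≤ M := mul_le_of_le_one_right hm.1 u.2.2
    linarith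
  by_contra hcon
  push Not at hcon
  have hne : ∀ c ∈ KG p L, ∀ u, endpt c = m u → dist c γ ≠ r := by
    intro c hc u hcu h
    have := hcon c hc h
    rw [hcu] at this
    linarith [hqm u]
  have huniq : ∀ c ∈ KG p L, ∀ d ∈ KG p L, ∀ u, endpt c = m u → endpt d = m u → c = d := by
    intro c hc d hd u h1 h2
    by_contra hcd
    exact hcut (m u) (hlt u) ⟨c, d, _, _, KG_isGeod hc, KG_isGeod hd, hc.2.1, h1, hd.2.1, h2, hcd⟩
  have hK := isCompact_KG p L
  have hA : IsClosed (endpt '' (KG p L ∩ {c | dist c γ ≤ r})) :=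
    ((hK.inter_right (isClosed_le (continuous_id.dist continuous_const)
      continuous_const)).image continuous_endpt).isClosed
  have hB : IsClosed (endpt '' (KG p L ∩ {c | r ≤ dist c γ})) :=
    ((hK.inter_right (isClosed_le continuous_const
      (continuous_id.dist continuous_const))).image continuous_endpt).isClosed
  have hconn : IsPreconnected (range m) := isPreconnected_range m.continuous
  rw [isPreconnected_closed_iff] at hconn
  suffices hne' : (range m ∩ (endpt '' (KG p L ∩ {c | dist c γ ≤ r}) ∩
      endpt '' (KG p L ∩ {c | r ≤ dist c γ}))).Nonempty by
    obtain ⟨_, ⟨u, rfl⟩, ⟨c, ⟨hc, hc1⟩, hcu⟩, ⟨d, ⟨hd, hd1⟩, hdu⟩⟩ := hne'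
    have := huniq c hc d hd u hcu hdu
    subst this
    exact hne c hc u hcu (le_antisymm hc1 hd1)
  refine hconn _ _ hA hB ?_ ?_ ?_
  · rintro _ ⟨u, rfl⟩
    obtain ⟨c, Lc, hc, h0, h1⟩ := hgeo p (m u)
    have hcK : c ∈ KG p L := hc.mem_KG h0 (by rw [h1]; exact (hlt u).le)
    rcases le_total (dist c γ) r with h | h
    · exact Or.inl ⟨c, ⟨hcK, h⟩, h1⟩
    · exact Or.inr ⟨c, ⟨hcK, h⟩, h1⟩
  · refine ⟨m pt0, ⟨pt0, rfl⟩, initPart γ a, ⟨?_, ?_⟩, ?_⟩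
    · refine (initPart_geod hγ a).mem_KG ((initPart_zero _ _).trans hγ0) ?_
      rw [initPart_one, ← hm0]; exact (hlt _).le
    · exact (initPart_dist hγ a).trans har.le
    · rw [hm0]; exact initPart_one _ _
  · refine ⟨m pt1, ⟨pt1, rfl⟩, initPart σ b, ⟨?_, ?_⟩, ?_⟩
    · refine (initPart_geod hσ b).mem_KG ((initPart_zero _ _).trans hσ0) ?_
      rw [initPart_one, ← hm1]; exact (hlt _).le
    · have h1 := initPart_dist hσ b
      have h2 := dist_triangle γ (initPart σ b) σ
      rw [dist_comm γ (initPart σ b)] at h2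
      show r ≤ dist (initPart σ b) γ
      linarith
    · rw [hm1]; exact initPart_one _ _

/-- Concatenation of `γ` and the reverse of `σ`. -/
def concat (γ σ : C(I01, X)) (h : γ pt1 = σ pt1) : C(I01, X) :=
  ⟨fun t => if (t : ℝ) ≤ 1 / 2 then γ (projIcc 0 1 zero_le_one (2 * t))
    else σ (projIcc 0 1 zero_le_one (2 - 2 * t)), by
    refine Continuous.if_le ?_ ?_ continuous_subtype_val continuous_const ?_
    · exact γ.continuous.comp (continuous_projIcc.comp (by fun_prop))
    · exact σ.continuous.comp (continuous_projIcc.comp (by fun_prop))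
    · intro t ht
      rw [ht]
      have e1 : projIcc (0 : ℝ) 1 zero_le_one (2 * (1 / 2)) = pt1 := by
        rw [projIcc_of_right_le _ (by norm_num)]; rfl
      have e2 : projIcc (0 : ℝ) 1 zero_le_one (2 - 2 * (1 / 2)) = pt1 := by
        rw [projIcc_of_right_le _ (by norm_num)]; rfl
      rw [e1, e2, h]⟩

lemma concat_left (γ σ : C(I01, X)) (h : γ pt1 = σ pt1) (t : I01) (ht : (t : ℝ) ≤ 1 / 2) :
    concat γ σ h t = γ ⟨2 * t, by constructor <;> linarith [t.2.1]⟩ := by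
  show (if (t : ℝ) ≤ 1 / 2 then _ else _) = _
  rw [if_pos ht, projIcc_of_mem zero_le_one (by constructor <;> linarith [t.2.1])]

lemma concat_right (γ σ : C(I01, X)) (h : γ pt1 = σ pt1) (t : I01) (ht : 1 / 2 ≤ (t : ℝ)) :
    concat γ σ h t = σ ⟨2 - 2 * t, by constructor <;> linarith [t.2.2]⟩ := by
  rcases ht.eq_or_lt with h' | h'
  · rw [concat_left _ _ _ _ h'.ge]
    have e1 : (⟨2 * t, by constructor <;> linarith [t.2.1]⟩ : I01) = pt1 :=
      Subtype.ext (by simp only [pt1]; linarith)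
    have e2 : (⟨2 - 2 * t, by constructor <;> linarith [t.2.1]⟩ : I01) = pt1 :=
      Subtype.ext (by simp only [pt1]; linarith)
    rw [e1, e2, h]
  · show (if (t : ℝ) ≤ 1 / 2 then _ else _) = _
    rw [if_neg (not_le.2 h'), projIcc_of_mem zero_le_one (by constructor <;> linarith [t.2.2])]

/-- If the concatenation is not a local geodesic, there are short cuts near the midpoint. -/
lemma shortcut {γ σ : C(I01, X)} {L : ℝ} (hL : 0 < L) (h : γ pt1 = σ pt1)
    (hγ : IsGeod γ L) (hσ : IsGeod σ L) (hnot : ¬ IsLocGeod (concat γ σ h) (2 * L)) :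
    ∀ ε > 0, ∃ a b : I01, 1 - (a : ℝ) < ε ∧ 1 - (b : ℝ) < ε ∧
      dist (γ a) (σ b) < L * (1 - a) + L * (1 - b) := by
  intro ε hε
  by_contra hcon
  push Not at hcon
  apply hnot
  have hleft : ∀ s s' : I01, (s : ℝ) ≤ 1 / 2 → (s' : ℝ) ≤ 1 / 2 →
      dist (concat γ σ h s) (concat γ σ h s') = 2 * L * |(s : ℝ) - s'| := by
    intro s s' hs hs'
    rw [concat_left _ _ _ _ hs, concat_left _ _ _ _ hs', hγ.2]
    show L * |2 * (s : ℝ) - 2 * s'| = _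
    rw [← mul_sub, abs_mul, abs_two]; ring
  have hright : ∀ s s' : I01, 1 / 2 ≤ (s : ℝ) → 1 / 2 ≤ (s' : ℝ) →
      dist (concat γ σ h s) (concat γ σ h s') = 2 * L * |(s : ℝ) - s'| := by
    intro s s' hs hs'
    rw [concat_right _ _ _ _ hs, concat_right _ _ _ _ hs', hσ.2]
    show L * |2 - 2 * (s : ℝ) - (2 - 2 * s')| = _
    have : 2 - 2 * (s : ℝ) - (2 - 2 * s') = -(2 * (s - s')) := by ring
    rw [this, abs_neg, abs_mul, abs_two]; ring
  have hmid : ∀ s s' : I01, (s : ℝ) ≤ 1 / 2 → 1 / 2 ≤ (s' : ℝ) → 1 / 2 - (s : ℝ) < ε / 2 →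
      (s' : ℝ) - 1 / 2 < ε / 2 →
      dist (concat γ σ h s) (concat γ σ h s') = 2 * L * |(s : ℝ) - s'| := by
    intro s s' hs hs' h1 h2
    rw [abs_sub_comm, abs_of_nonneg (by linarith)]
    apply le_antisymm
    · let mid : I01 := ⟨1 / 2, by norm_num⟩
      have t := dist_triangle (concat γ σ h s) (concat γ σ h mid) (concat γ σ h s')
      have m1 : |(s : ℝ) - mid| = 1 / 2 - s := by
        rw [abs_sub_comm]; exact abs_of_nonneg (sub_nonneg.2 hs)
      have m2 : |(mid : ℝ) - s'| = s' - 1 / 2 := by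
        rw [abs_sub_comm]; exact abs_of_nonneg (sub_nonneg.2 hs')
      rw [hleft s mid hs le_rfl, hright mid s' le_rfl hs', m1, m2] at t
      linarith
    · rw [concat_left _ _ _ _ hs, concat_right _ _ _ _ hs']
      refine le_trans (le_of_eq ?_) (hcon _ _ ?_ ?_)
      · simp only; ring
      · simp only; linarith
      · simp only; linarith
  refine ⟨by positivity, fun t => ?_⟩
  rcases lt_trichotomy (t : ℝ) (1 / 2) with ht | ht | ht
  · refine ⟨1 / 2 - t, by linarith, fun s s' hs hs' => hleft s s' ?_ ?_⟩
    · linarith [(abs_lt.1 hs).2]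
    · linarith [(abs_lt.1 hs').2]
  · refine ⟨ε / 2, by positivity, fun s s' hs hs' => ?_⟩
    rw [ht] at hs hs'
    have hs := abs_lt.1 hs
    have hs' := abs_lt.1 hs'
    rcases le_total (s : ℝ) (1 / 2) with h1 | h1 <;> rcases le_total (s' : ℝ) (1 / 2) with h2 | h2
    · exact hleft s s' h1 h2
    · exact hmid s s' h1 h2 (by linarith) (by linarith)
    · rw [dist_comm, abs_sub_comm]
      exact hmid s' s h2 h1 (by linarith) (by linarith)
    · exact hright s s' h1 h2
  · refine ⟨t - 1 / 2, by linarith, fun s s' hs hs' => hright s s' ?_ ?_⟩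
    · linarith [(abs_lt.1 hs).1]
    · linarith [(abs_lt.1 hs').1]

lemma nonconj {p : X} {γ : C(I01, X)} {L : ℝ} (hγ : IsGeod γ L) (h0 : γ pt0 = p)
    (hn : ¬ ConjugateAlong p γ) : ∃ δ > 0, ∀ R, ∀ c ∈ KG p R, ∀ d ∈ KG p R,
      dist c γ < δ → dist d γ < δ → endpt c = endpt d → c = d := by
  have hmem : γ ∈ LocGeodFrom p := ⟨⟨_, hγ.isLoc⟩, h0⟩
  have : ∃ U : Set C(I01, X), U ⊆ LocGeodFrom p ∧ U ∈ 𝓝[LocGeodFrom p] γ ∧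
      Topology.IsEmbedding (U.restrict endpt) := by
    by_contra hU
    exact hn ⟨hmem, hU⟩
  obtain ⟨U, -, hU, hemb⟩ := this
  obtain ⟨δ, hδ, hsub⟩ := Metric.mem_nhdsWithin_iff.1 hU
  refine ⟨δ, hδ, fun R c hc d hd hcδ hdδ hcd => ?_⟩
  have hcU : c ∈ U := hsub ⟨hcδ, ⟨_, (KG_isGeod hc).isLoc⟩, hc.2.1⟩
  have hdU : d ∈ U := hsub ⟨hdδ, ⟨_, (KG_isGeod hd).isLoc⟩, hd.2.1⟩
  have := @hemb.injective ⟨c, hcU⟩ ⟨d, hdU⟩ hcd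
  exact congrArg Subtype.val this

/-- **Klingenberg Lemma.** Let `X` be a proper geodesic metric space and
`p ∈ X`. If `q ∈ closure (Cut p)` satisfies `inj p = dist p q > 0`, then either `q` is
conjugate to `p` along some geodesic from `p` to `q`, or there is a local geodesic
`γ : [0,1] → X` from `p` to `p` of length `2 · inj p = 2 · dist p q` with midpoint `q`. -/
theorem klingenberg_lemma {X : Type*} [MetricSpace X] [ProperSpace X]
    (hgeo : GeodesicSpace X) (p q : X) (hq : q ∈ closure (Cut p))
    (hinj : inj p = edist p q) (hpos : 0 < dist p q) :
    (∃ (γ : C(I01, X)) (L : ℝ), IsGeod γ L ∧ γ pt0 = p ∧ γ pt1 = q ∧ ConjugateAlong p γ) ∨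
    (∃ (γ : C(I01, X)) (L : ℝ), IsLocGeod γ L ∧ γ pt0 = p ∧ γ pt1 = p ∧
      L = 2 * dist p q ∧ γ ⟨1 / 2, by norm_num⟩ = q) := by
  by_cases hall : ∃ (γ : C(I01, X)) (L : ℝ),
      IsGeod γ L ∧ γ pt0 = p ∧ γ pt1 = q ∧ ConjugateAlong p γ
  · exact Or.inl hall
  right
  have hnc : ∀ (γ : C(I01, X)) (L : ℝ), IsGeod γ L → γ pt0 = p → γ pt1 = q →
      ¬ ConjugateAlong p γ := fun γ L h1 h2 h3 h4 => hall ⟨γ, L, h1, h2, h3, h4⟩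
  have hcut : ∀ m, dist p m < dist p q → m ∉ Cut p := by
    intro m hm hmc
    have h1 : inj p ≤ edist p m := iInf₂_le m hmc
    rw [hinj, edist_dist, edist_dist, ENNReal.ofReal_le_ofReal_iff dist_nonneg] at h1
    linarith
  -- `q` is a cut point
  have hqcut : q ∈ Cut p := by
    by_contra hqc
    obtain ⟨γ, L, hγ, h0, h1⟩ := hgeo p q
    obtain ⟨δ, hδ, hinjδ⟩ := nonconj hγ h0 (hnc γ L hγ h0 h1)
    set K := KG p (dist p q + 1) ∩ {c | δ ≤ dist c γ} with hKdef
    have hKc : IsCompact K := (isCompact_KG p _).inter_right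
      (isClosed_le continuous_const (continuous_id.dist continuous_const))
    have hcl : IsClosed (endpt '' K) := (hKc.image continuous_endpt).isClosed
    have hqK : q ∉ endpt '' K := by
      rintro ⟨c, ⟨hc, hcδ⟩, hcq⟩
      refine hqc ⟨c, γ, _, _, KG_isGeod hc, hγ, hc.2.1, hcq, h0, h1, ?_⟩
      rintro rfl
      have : δ ≤ dist c c := hcδ
      rw [dist_self] at this
      linarith
    have hnb : (endpt '' K)ᶜ ∩ ball q 1 ∈ 𝓝 q :=
      inter_mem (hcl.isOpen_compl.mem_nhds hqK) (ball_mem_nhds q one_pos)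
    obtain ⟨x, ⟨hxK, hxb⟩, c, d, Lc, Ld, hc, hd, hc0, hc1, hd0, hd1, hcd⟩ :=
      mem_closure_iff_nhds.1 hq _ hnb
    have hpx : dist p x ≤ dist p q + 1 := by
      have := dist_triangle_right p x q
      have t := dist_triangle p q x
      rw [mem_ball, dist_comm] at hxb
      linarith
    have hcK : c ∈ KG p (dist p q + 1) := hc.mem_KG hc0 (by rwa [hc1])
    have hdK : d ∈ KG p (dist p q + 1) := hd.mem_KG hd0 (by rwa [hd1])
    refine hcd (hinjδ _ c hcK d hdK ?_ ?_ (hc1.trans hd1.symm))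
    · by_contra hh
      exact hxK ⟨c, ⟨hcK, not_lt.1 hh⟩, hc1⟩
    · by_contra hh
      exact hxK ⟨d, ⟨hdK, not_lt.1 hh⟩, hd1⟩
  obtain ⟨γ, σ, Lγ, Lσ, hγ, hσ, hγ0, hγ1, hσ0, hσ1, hne⟩ := hqcut
  have e1 : Lγ = dist p q := by rw [← hγ.len, hγ0, hγ1]
  have e2 : Lσ = dist p q := by rw [← hσ.len, hσ0, hσ1]
  subst e1
  subst e2
  have hend : γ pt1 = σ pt1 := hγ1.trans hσ1.symm
  refine ⟨concat γ σ hend, 2 * dist p q, ?_, ?_, ?_, rfl, ?_⟩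
  · by_contra hnot
    have hsc := shortcut hpos hend hγ hσ hnot
    obtain ⟨δ, hδ, hinjδ⟩ := nonconj hγ hγ0 (hnc γ _ hγ hγ0 hγ1)
    have hρ : 0 < dist γ σ := dist_pos.2 hne
    obtain ⟨r, hr0, hr⟩ := exists_between (lt_min hδ hρ)
    have hrδ : r < δ := hr.trans_le (min_le_left _ _)
    have hrρ : r < dist γ σ := hr.trans_le (min_le_right _ _)
    set K := KG p (dist p q) ∩ {c | dist c γ = r} with hKdef
    have hKc : IsCompact K := (isCompact_KG p _).inter_right
      (isClosed_eq (continuous_id.dist continuous_const) continuous_const)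
    have hcl : IsClosed (endpt '' K) := (hKc.image continuous_endpt).isClosed
    have hqK : q ∈ closure (endpt '' K) := by
      rw [Metric.mem_closure_iff]
      intro η hη
      set ε := min (η / 4) (min r (dist γ σ - r)) / dist p q with hε
      have hεpos : 0 < ε := div_pos (lt_min (by linarith) (lt_min hr0 (by linarith))) hpos
      obtain ⟨a, b, ha, hb, hab⟩ := hsc ε hεpos
      have hm : dist p q * ε = min (η / 4) (min r (dist γ σ - r)) := by
        rw [hε]; field_simp
      have ha' : dist p q * (1 - a) < min (η / 4) (min r (dist γ σ - r)) := by
        rw [← hm]; exact mul_lt_mul_of_pos_left ha hpos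
      have hb' : dist p q * (1 - b) < min (η / 4) (min r (dist γ σ - r)) := by
        rw [← hm]; exact mul_lt_mul_of_pos_left hb hpos
      rw [lt_min_iff, lt_min_iff] at ha' hb'
      obtain ⟨c, hcK, hcr, hcq⟩ := core hgeo hγ hσ hγ0 hσ0 hγ1 hcut a b hab ha'.2.1 hb'.2.2
      refine ⟨endpt c, ⟨c, ⟨hcK, hcr⟩, rfl⟩, ?_⟩
      rw [dist_comm]
      linarith [ha'.1, hb'.1]
    rw [hcl.closure_eq] at hqK
    obtain ⟨c, ⟨hc, hcr⟩, hcq⟩ := hqK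
    have hcr : dist c γ = r := hcr
    have hγK : γ ∈ KG p (dist p q) := hγ.mem_KG hγ0 (by rw [hγ1])
    have := hinjδ _ c hc γ hγK (by linarith) (by rwa [dist_self]) (hcq.trans hγ1.symm)
    rw [this, dist_self] at hcr
    linarith
  · rw [concat_left _ _ _ _ (by simp [pt0]), ← hγ0]
    congr 1
    exact Subtype.ext (by simp [pt0])
  · rw [concat_right _ _ _ _ (by simp only [pt1]; norm_num), ← hσ0]
    congr 1
    exact Subtype.ext (by simp [pt0, pt1])
  · rw [concat_left _ _ _ _ (by simp), ← hγ1]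
    congr 1
    exact Subtype.ext (by simp [pt1])

end InjSoul
end
end

section
/- Let X be a proper geodesic metric space that is not compact, fix p₀ ∈ X, define b : X → ℝ by b(p) = inf over all unit-speed rays c with c(0) = p₀ of b_c(p), and for t ∈ ℝ set C_t = b^{-1}([−t,∞)). Then for all t₁ ≤ t₂ one has C_{t₁} = { p ∈ C_{t₂} : dist(p, ∂C_{t₂}) ≥ t₂ − t₁ }, where ∂C_{t₂} denotes the topological frontier of C_{t₂} and dist(p, ∂C_{t₂}) is the infimum of dist(p, r) over r ∈ ∂C_{t₂}; in particular C_{t₁} ⊆ C_{t₂}. -/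
open Filter
open scoped ENNReal

/-- A unit-speed ray in a metric space: `dist (c s) (c t) = |s - t|` for all `s, t ≥ 0`. -/
def IsUnitSpeedRay {X : Type*} [MetricSpace X] (c : ℝ → X) : Prop :=
  ∀ s t : ℝ, 0 ≤ s → 0 ≤ t → dist (c s) (c t) = |s - t|

theorem inter_frontier_nonempty_aux {X : Type*} [TopologicalSpace X] {s t : Set X}
    (ht : IsPreconnected t) (h1 : (t ∩ s).Nonempty) (h2 : (t ∩ sᶜ).Nonempty) :
    (t ∩ frontier s).Nonempty := by
  by_contra hcon
  have hno : ∀ x ∈ t, x ∉ frontier s := fun x hx hxf => hcon ⟨x, hx, hxf⟩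
  have hin : ∀ x ∈ t, x ∈ s → x ∈ interior s := by
    intro x hx hxs
    by_contra hni
    exact hno x hx ⟨subset_closure hxs, hni⟩
  have hout : ∀ x ∈ t, x ∈ sᶜ → x ∈ interior sᶜ := by
    intro x hx hxs
    by_contra hni
    refine hno x hx ?_
    rw [← frontier_compl]
    exact ⟨subset_closure hxs, hni⟩
  obtain ⟨x, hx, hxs⟩ := h1
  obtain ⟨y, hy, hys⟩ := h2
  obtain ⟨z, -, hz1, hz2⟩ := ht (interior s) (interior sᶜ) isOpen_interior isOpen_interior
    (fun w hw => (Classical.em (w ∈ s)).imp (hin w hw) (hout w hw))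
    ⟨x, hx, hin x hx hxs⟩ ⟨y, hy, hout y hy hys⟩
  exact interior_subset hz2 (interior_subset hz1)

theorem exists_ray_aux {X : Type*} [MetricSpace X] [ProperSpace X]
    (hgeo : ∀ x y : X, ∃ (g : ℝ → X) (L : ℝ), 0 ≤ L ∧
      (∀ s ∈ Set.Icc (0 : ℝ) 1, ∀ t ∈ Set.Icc (0 : ℝ) 1, dist (g s) (g t) = L * |s - t|) ∧
      g 0 = x ∧ g 1 = y)
    (hnc : ¬ CompactSpace X) (p₀ : X) : ∃ c : ℝ → X, IsUnitSpeedRay c ∧ c 0 = p₀ := by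
  have hfar : ∀ n : ℕ, ∃ x : X, (n : ℝ) < dist p₀ x := by
    intro n
    by_contra hcon
    push Not at hcon
    apply hnc
    refine ⟨(isCompact_closedBall p₀ (n : ℝ)).of_isClosed_subset isClosed_univ ?_⟩
    intro x _
    rw [Metric.mem_closedBall, dist_comm]
    exact hcon x
  have hseg : ∀ n : ℕ, ∃ f : ℝ → X, f 0 = p₀ ∧ ∀ s t : ℝ, 0 ≤ s → 0 ≤ t → s ≤ n → t ≤ n →
      dist (f s) (f t) = |s - t| := by
    intro n
    obtain ⟨x, hx⟩ := hfar n
    obtain ⟨g, L, hL, hg, h0, h1⟩ := hgeo p₀ x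
    have hLd : dist p₀ x = L := by
      have := hg 0 (by simp) 1 (by simp)
      rw [h0, h1] at this
      simpa using this
    have hn : (0 : ℝ) ≤ n := Nat.cast_nonneg n
    have hLpos : 0 < L := by linarith
    refine ⟨fun t => g (t / L), by simp [h0], ?_⟩
    intro s t hs ht hsn htn
    have hs1 : s / L ≤ 1 := by rw [div_le_one hLpos]; linarith
    have ht1 : t / L ≤ 1 := by rw [div_le_one hLpos]; linarith
    have := hg (s / L) ⟨by positivity, hs1⟩ (t / L) ⟨by positivity, ht1⟩
    simp only [this]
    rw [← sub_div, abs_div, abs_of_pos hLpos]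
    field_simp
  choose f hf0 hf using hseg
  have hev : ∀ t : ℝ, ∀ᶠ n : ℕ in (hyperfilter ℕ : Filter ℕ), t ≤ n := by
    intro t
    have h1 : ∀ᶠ n : ℕ in atTop, t ≤ (n : ℝ) := tendsto_natCast_atTop_atTop.eventually_ge_atTop t
    have h2 : (hyperfilter ℕ : Filter ℕ) ≤ atTop := by
      rw [← Nat.cofinite_eq_atTop]
      exact hyperfilter_le_cofinite
    exact h2 h1
  have hlim : ∀ t : ℝ, ∃ x : X, 0 ≤ t →
      Tendsto (fun n => f n t) (hyperfilter ℕ : Filter ℕ) (nhds x) := by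
    intro t
    by_cases ht : 0 ≤ t
    · have hmem : ∀ᶠ n : ℕ in (hyperfilter ℕ : Filter ℕ), f n t ∈ Metric.closedBall p₀ t := by
        filter_upwards [hev t] with n hn
        have := hf n t 0 ht le_rfl hn (Nat.cast_nonneg n)
        rw [hf0, sub_zero, abs_of_nonneg ht] at this
        exact this.le
      obtain ⟨x, -, hx⟩ := (isCompact_closedBall p₀ t).ultrafilter_le_nhds
        ((hyperfilter ℕ).map (fun n => f n t)) (by
          rw [le_principal_iff]
          exact hmem)
      exact ⟨x, fun _ => hx⟩
    · exact ⟨p₀, fun h => absurd h ht⟩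
  choose c hc using hlim
  refine ⟨c, ?_, ?_⟩
  · intro s t hs ht
    refine tendsto_nhds_unique ((hc s hs).dist (hc t ht)) ?_
    refine tendsto_const_nhds.congr' ?_
    filter_upwards [hev s, hev t] with n h1 h2
    exact (hf n s t hs ht h1 h2).symm
  · refine tendsto_nhds_unique (hc 0 le_rfl) ?_
    simp only [hf0]
    exact tendsto_const_nhds

/-- Let `X` be a proper geodesic noncompact metric space, `p₀ ∈ X`, let `b`
be the infimum over all unit-speed rays `c` with `c 0 = p₀` of the Busemann functions `b_c`,
and set `C_t = b ⁻¹ [-t,∞)`.  Then for `t₁ ≤ t₂` one has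
`C_{t₁} = {p ∈ C_{t₂} : dist(p, ∂C_{t₂}) ≥ t₂ - t₁}` (the distance to the frontier being the
infimum of `dist p r` over `r ∈ ∂C_{t₂}`, equal to `∞` if the frontier is empty); in
particular `C_{t₁} ⊆ C_{t₂}`. -/
theorem busemann_superlevel_dist_frontier {X : Type*} [MetricSpace X] [ProperSpace X]
    (hgeo : ∀ x y : X, ∃ (g : ℝ → X) (L : ℝ), 0 ≤ L ∧
      (∀ s ∈ Set.Icc (0 : ℝ) 1, ∀ t ∈ Set.Icc (0 : ℝ) 1, dist (g s) (g t) = L * |s - t|) ∧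
      g 0 = x ∧ g 1 = y)
    (hnc : ¬ CompactSpace X) (p₀ : X)
    (busemann : (ℝ → X) → X → ℝ)
    (hbus : ∀ c : ℝ → X, IsUnitSpeedRay c → ∀ q : X,
      Tendsto (fun t => dist q (c t) - t) atTop (nhds (busemann c q)))
    (b : X → ℝ)
    (hb : ∀ p : X, b p = sInf {v | ∃ c : ℝ → X, IsUnitSpeedRay c ∧ c 0 = p₀ ∧ v = busemann c p})
    (t₁ t₂ : ℝ) (h : t₁ ≤ t₂) :
    b ⁻¹' Set.Ici (-t₁) =
      {p ∈ b ⁻¹' Set.Ici (-t₂) |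
        ENNReal.ofReal (t₂ - t₁) ≤ ⨅ r ∈ frontier (b ⁻¹' Set.Ici (-t₂)), edist p r} ∧
    b ⁻¹' Set.Ici (-t₁) ⊆ b ⁻¹' Set.Ici (-t₂) := by
  have hbl : ∀ c : ℝ → X, IsUnitSpeedRay c → ∀ q : X, ∀ t : ℝ, 0 ≤ t →
      busemann c q ≤ dist q (c t) - t := by
    intro c hc q t ht
    refine le_of_tendsto (hbus c hc q) ?_
    filter_upwards [eventually_ge_atTop t] with u hu
    have h1 := hc t u ht (ht.trans hu)
    rw [abs_of_nonpos (by linarith)] at h1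
    have := dist_triangle q (c t) (c u)
    linarith
  have hlow : ∀ c : ℝ → X, IsUnitSpeedRay c → ∀ q : X, -dist q (c 0) ≤ busemann c q := by
    intro c hc q
    refine ge_of_tendsto (hbus c hc q) ?_
    filter_upwards [eventually_ge_atTop 0] with u hu
    have h1 := hc 0 u le_rfl hu
    rw [abs_of_nonpos (by linarith)] at h1
    have := dist_triangle (c 0) q (c u)
    rw [dist_comm (c 0) q] at this
    linarith
  have hlip : ∀ c : ℝ → X, IsUnitSpeedRay c → ∀ p q : X,
      busemann c p ≤ busemann c q + dist p q := by
    intro c hc p q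
    refine le_of_tendsto_of_tendsto' (hbus c hc p) ((hbus c hc q).add_const (dist p q)) ?_
    intro u
    have := dist_triangle p q (c u)
    linarith
  obtain ⟨c₀, hc₀, hc₀0⟩ := exists_ray_aux hgeo hnc p₀
  have hble : ∀ c : ℝ → X, IsUnitSpeedRay c → c 0 = p₀ → ∀ p : X, b p ≤ busemann c p := by
    intro c hc h0 p
    rw [hb]
    refine csInf_le ⟨-dist p p₀, ?_⟩ ⟨c, hc, h0, rfl⟩
    rintro v ⟨c', hc', h0', rfl⟩
    have := hlow c' hc' p
    rwa [h0'] at this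
  have hblip : ∀ p q : X, b p ≤ b q + dist p q := by
    intro p q
    rw [← sub_le_iff_le_add, hb q]
    refine le_csInf ⟨_, c₀, hc₀, hc₀0, rfl⟩ ?_
    rintro v ⟨c, hc, h0, rfl⟩
    have h1 := hble c hc h0 p
    have h2 := hlip c hc p q
    linarith
  have hbcont : Continuous b := by
    refine (LipschitzWith.of_le_add hblip).continuous
  have hsub : b ⁻¹' Set.Ici (-t₁) ⊆ b ⁻¹' Set.Ici (-t₂) := by
    intro p hp
    simp only [Set.mem_preimage, Set.mem_Ici] at hp ⊢
    linarith
  refine ⟨?_, hsub⟩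
  apply Set.Subset.antisymm
  · intro p hp
    refine ⟨hsub hp, ?_⟩
    refine le_iInf₂ fun r hr => ?_
    rw [edist_dist]
    apply ENNReal.ofReal_le_ofReal
    have hr2 : b r ≤ -t₂ := by
      have h1 : r ∈ closure ((b ⁻¹' Set.Ici (-t₂))ᶜ) := by
        rw [frontier_eq_closure_inter_closure] at hr
        exact hr.2
      have h2 : closure ((b ⁻¹' Set.Ici (-t₂))ᶜ) ⊆ b ⁻¹' Set.Iic (-t₂) := by
        refine closure_minimal ?_ (isClosed_Iic.preimage hbcont)
        intro x hx
        simp only [Set.mem_compl_iff, Set.mem_preimage, Set.mem_Ici, not_le, Set.mem_Iic] at hx ⊢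
        exact hx.le
      exact h2 h1
    have := hblip p r
    simp only [Set.mem_preimage, Set.mem_Ici] at hp
    linarith
  · rintro p ⟨hp, hd⟩
    by_contra hcon
    simp only [Set.mem_preimage, Set.mem_Ici, not_le] at hp hcon
    obtain ⟨c, hc, h0, hcp⟩ : ∃ c : ℝ → X, IsUnitSpeedRay c ∧ c 0 = p₀ ∧ busemann c p < -t₁ := by
      rw [hb p] at hcon
      have hne : {v | ∃ c : ℝ → X, IsUnitSpeedRay c ∧ c 0 = p₀ ∧ v = busemann c p}.Nonempty :=
        ⟨_, c₀, hc₀, hc₀0, rfl⟩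
      obtain ⟨v, ⟨c, hc, h0, rfl⟩, hv⟩ := exists_lt_of_csInf_lt hne hcon
      exact ⟨c, hc, h0, hv⟩
    have hpc := hble c hc h0 p
    obtain ⟨m, hm1, hm2⟩ := exists_between hcp
    -- the distance travelled
    have hs0 : 0 < m + t₂ := by linarith
    obtain ⟨T, hT1, hT2, hT3⟩ := (((hbus c hc p).eventually (gt_mem_nhds hm1)).and
      ((eventually_ge_atTop 0).and (eventually_ge_atTop (m + t₂ + dist p p₀)))).exists
    obtain ⟨g, L, hL, hg, hg0, hg1⟩ := hgeo p (c T)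
    have hLd : dist p (c T) = L := by
      have := hg 0 (by simp) 1 (by simp)
      rw [hg0, hg1] at this
      simpa using this
    have hsL : m + t₂ ≤ L := by
      have h1 := hc 0 T le_rfl hT2
      rw [abs_of_nonpos (by linarith), h0] at h1
      have := dist_triangle p₀ p (c T)
      rw [dist_comm p₀ p] at this
      linarith
    have hLpos : 0 < L := by linarith
    set a := (m + t₂) / L with ha
    have haL : L * a = m + t₂ := by rw [ha]; field_simp
    have ha0 : 0 ≤ a := by positivity
    have ha1 : a ≤ 1 := by rw [ha, div_le_one hLpos]; exact hsL
    have hq : b (g a) < -t₂ := by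
      have h1 := hg a ⟨ha0, ha1⟩ 1 (by simp)
      rw [hg1, abs_of_nonpos (by linarith)] at h1
      have h2 := hbl c hc (g a) T hT2
      have h3 := hble c hc h0 (g a)
      have h4 : L * -(a - 1) = L - L * a := by ring
      linarith
    have hgc : ContinuousOn g (Set.Icc 0 a) := by
      have : LipschitzOnWith (Real.toNNReal L) g (Set.Icc 0 a) := by
        refine LipschitzOnWith.of_dist_le_mul ?_
        intro x hx y hy
        rw [hg x ⟨hx.1, hx.2.trans ha1⟩ y ⟨hy.1, hy.2.trans ha1⟩, Real.coe_toNNReal L hL,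
          Real.dist_eq]
      exact this.continuousOn
    obtain ⟨r, ⟨u, hu, rfl⟩, hr⟩ := inter_frontier_nonempty_aux
      (s := b ⁻¹' Set.Ici (-t₂)) (isPreconnected_Icc.image g hgc)
      ⟨p, ⟨0, ⟨le_rfl, ha0⟩, hg0⟩, hp⟩
      ⟨g a, ⟨a, ⟨ha0, le_rfl⟩, rfl⟩, by simpa using hq⟩
    have h1 := hd.trans (iInf₂_le (g u) hr)
    rw [edist_dist, ENNReal.ofReal_le_ofReal_iff dist_nonneg] at h1
    have h2 := hg 0 (by simp) u ⟨hu.1, hu.2.trans ha1⟩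
    rw [hg0, zero_sub, abs_neg, abs_of_nonneg hu.1] at h2
    have h3 : L * u ≤ L * a := mul_le_mul_of_nonneg_left hu.2 hL
    linarith
end
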